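/- There exists an instance with two attributes (one with 4 values, one binary), 4 candidates, committee size k = 2, and a target distribution such that the L1-optimal committees and the (1,max)-optimal committees are disjoint. Concretely: candidates A=(x_1^1, x_2^2), B=(x_1^2, x_2^2), C=(x_1^3, x_2^1), D=(x_1^4, x_2^1); target π_1 = (0.5, 0.5, 0, 0) and π_2 = (0.9, 0.1); the L1-optimal committees are all pairs except {C,D} (each with loss 1.8 vs 2.6... specifically {C,D} has higher L1 loss), while the unique (1,max)-optimal committee is {C,D} with loss 0.6. -/

import Mathlib

open Finset

/-- Candidate `c`'s value on attribute 1 (which has 4 values): A↦0, B↦1, C↦2, D↦3. -/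
def attr1 : Fin 4 → Fin 4 := id

/-- Candidate `c`'s value on the binary attribute 2: A,B ↦ 1 (x_2^2), C,D ↦ 0 (x_2^1). -/
def attr2 : Fin 4 → Fin 2 := fun c => if c.val < 2 then 1 else 0

noncomputable def π1 : Fin 4 → ℝ := ![1/2, 1/2, 0, 0]

noncomputable def π2 : Fin 2 → ℝ := ![9/10, 1/10]

noncomputable def rep1 (S : Finset (Fin 4)) (j : Fin 4) : ℝ :=
  ((S.filter (fun c => attr1 c = j)).card : ℝ) / 2

noncomputable def rep2 (S : Finset (Fin 4)) (j : Fin 2) : ℝ :=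
  ((S.filter (fun c => attr2 c = j)).card : ℝ) / 2

noncomputable def loss1' (S : Finset (Fin 4)) : ℝ :=
  (∑ j, |rep1 S j - π1 j|) + ∑ j, |rep2 S j - π2 j|

noncomputable def loss1max (S : Finset (Fin 4)) : ℝ :=
  (⨆ j, |rep1 S j - π1 j|) + ⨆ j, |rep2 S j - π2 j|

theorem card_eq_two_cases (S : Finset (Fin 4)) (hS : S.card = 2) :
    S = {0, 1} ∨ S = {0, 2} ∨ S = {0, 3} ∨ S = {1, 2} ∨ S = {1, 3} ∨ S = {2, 3} := by
  revert S
  decide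

theorem rep1_eq (S : Finset (Fin 4)) (j : Fin 4) : rep1 S j = if j ∈ S then 1 / 2 else 0 := by
  have h : (S.filter fun c => attr1 c = j).card = if j ∈ S then 1 else 0 := by
    revert S j
    decide
  rw [rep1, h]
  split_ifs <;> norm_num

theorem rep2_zero (S : Finset (Fin 4)) :
    rep2 S 0 = (if 2 ∈ S then 1 / 2 else 0) + if 3 ∈ S then 1 / 2 else 0 := by
  have h : (S.filter fun c => attr2 c = 0).card =
      (if 2 ∈ S then 1 else 0) + if 3 ∈ S then 1 else 0 := by
    revert S
    decide
  rw [rep2, h]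
  split_ifs <;> norm_num

theorem rep2_one (S : Finset (Fin 4)) :
    rep2 S 1 = (if 0 ∈ S then 1 / 2 else 0) + if 1 ∈ S then 1 / 2 else 0 := by
  have h : (S.filter fun c => attr2 c = 1).card =
      (if 0 ∈ S then 1 else 0) + if 1 ∈ S then 1 else 0 := by
    revert S
    decide
  rw [rep2, h]
  split_ifs <;> norm_num

theorem iSup_fin_two (f : Fin 2 → ℝ) : ⨆ j, f j = max (f 0) (f 1) := by
  refine le_antisymm (ciSup_le ?_) (max_le ?_ ?_)
  · simp [Fin.forall_fin_two]
  all_goals exact le_ciSup (Set.finite_range f).bddAbove _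

theorem iSup_fin_four (f : Fin 4 → ℝ) :
    ⨆ j, f j = max (max (f 0) (f 1)) (max (f 2) (f 3)) := by
  refine le_antisymm (ciSup_le ?_) (max_le (max_le ?_ ?_) (max_le ?_ ?_))
  · simp [Fin.forall_fin_succ]
  all_goals exact le_ciSup (Set.finite_range f).bddAbove _

theorem loss1'_eq (S : Finset (Fin 4)) (hS : S.card = 2) :
    loss1' S = if S = {2, 3} then 11 / 5 else 9 / 5 := by
  rcases card_eq_two_cases S hS with rfl | rfl | rfl | rfl | rfl | rfl
  case inr.inr.inr.inr.inr =>
    simp [loss1', Fin.sum_univ_succ, rep1_eq, rep2_zero, rep2_one, π1, π2]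
    norm_num [abs_div]
  all_goals
    rw [if_neg (by decide)]
    simp [loss1', Fin.sum_univ_succ, rep1_eq, rep2_zero, rep2_one, π1, π2]
    norm_num [abs_div]

theorem loss1max_eq (S : Finset (Fin 4)) (hS : S.card = 2) :
    loss1max S = if S = {2, 3} then 3 / 5 else 9 / 10 := by
  rcases card_eq_two_cases S hS with rfl | rfl | rfl | rfl | rfl | rfl
  case inr.inr.inr.inr.inr =>
    simp [loss1max, iSup_fin_two, iSup_fin_four, rep1_eq, rep2_zero, rep2_one, π1, π2]
    norm_num [abs_div]
  all_goals
    rw [if_neg (by decide)]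
    simp [loss1max, iSup_fin_two, iSup_fin_four, rep1_eq, rep2_zero, rep2_one, π1, π2]
    norm_num [abs_div]

theorem stmt13 :
    (∀ S : Finset (Fin 4), S.card = 2 →
      ((∀ T : Finset (Fin 4), T.card = 2 → loss1' S ≤ loss1' T) ↔ S ≠ {2, 3})) ∧
    (∀ S : Finset (Fin 4), S.card = 2 →
      ((∀ T : Finset (Fin 4), T.card = 2 → loss1max S ≤ loss1max T) ↔ S = {2, 3})) := by
  refine ⟨fun S hS => ⟨fun h hS' => ?_, fun hS' T hT => ?_⟩,
    fun S hS => ⟨fun h => ?_, fun hS' T hT => ?_⟩⟩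
  · have h₀ := h {0, 1} rfl
    rw [loss1'_eq S hS, loss1'_eq _ rfl, if_pos hS', if_neg (by decide)] at h₀
    norm_num at h₀
  · rw [loss1'_eq S hS, loss1'_eq T hT, if_neg hS']
    split_ifs <;> norm_num
  · by_contra hS'
    have h₀ := h {2, 3} rfl
    rw [loss1max_eq S hS, loss1max_eq _ rfl, if_neg hS', if_pos rfl] at h₀
    norm_num at h₀
  · rw [loss1max_eq S hS, loss1max_eq T hT, if_pos hS']
    split_ifs <;> norm_num
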